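/- Let k be a field of characteristic different from 2 and let α ∈ k satisfy α² + α − 1 = 0. Let C = [[1,−1],[1,−α]] and D = [[0,1],[α−1,1]] over k. Then for all i, j ∈ {1,2,3,4} and all c ∈ k, Cⁱ ≠ c·Dʲ. Consequently, the cyclic subgroups of order 5 of PGL₂(k) generated by the images of C and of D intersect trivially. -/

import Mathlib

/-! Modulo scalars, an element common to `⟨C⟩` and `⟨D⟩` commutes with both `C` and `D`. For `2 × 2`
matrices the entries of the commutator `⁅C, D⁆` annihilate every non-scalar part of such an element,
and one of these entries is `-α`, a unit because `α * (α + 1) = 1`. So the element is scalar,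
whereas the lower left entries of `C`, `C²`, `C³`, `C⁴` are units. -/

section Group

variable {G : Type*} [Group G]

theorem zpowers_mk_inf_zpowers_mk_eq_bot_of_commute {u v : G}
    (h : ∀ w, Commute w u → Commute w v → w ∈ Subgroup.center G) :
    Subgroup.zpowers (QuotientGroup.mk u : G ⧸ Subgroup.center G) ⊓
      Subgroup.zpowers (QuotientGroup.mk v : G ⧸ Subgroup.center G) = ⊥ := by
  rw [← disjoint_iff, Subgroup.disjoint_def]
  rintro _ ⟨m, rfl⟩ ⟨n, hnm⟩
  have hz : (v ^ n)⁻¹ * u ^ m ∈ Subgroup.center G := QuotientGroup.eq.mp hnm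
  have hv : Commute (u ^ m) v := by
    rw [← mul_inv_cancel_left (v ^ n) (u ^ m)]
    exact (Commute.zpow_self v n).mul_left (Subgroup.mem_center_iff.mp hz v).symm
  exact (QuotientGroup.eq_one_iff _).mpr (h _ (Commute.zpow_self u m) hv)

end Group

section Matrix

open Matrix

variable {R : Type*} [CommRing R] {M N W : Matrix (Fin 2) (Fin 2) R} {i j : Fin 2}

theorem minors_eq_of_commute (h : Commute W M) :
    W 0 1 * M 1 0 = W 1 0 * M 0 1 ∧
    W 0 1 * (M 0 0 - M 1 1) = (W 0 0 - W 1 1) * M 0 1 ∧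
    W 1 0 * (M 0 0 - M 1 1) = (W 0 0 - W 1 1) * M 1 0 := by
  have entry (r s : Fin 2) : W r 0 * M 0 s + W r 1 * M 1 s = M r 0 * W 0 s + M r 1 * W 1 s := by
    simpa only [mul_apply, Fin.sum_univ_two] using congrFun₂ h.eq r s
  refine ⟨?_, ?_, ?_⟩
  · linear_combination entry 0 0
  · linear_combination -entry 0 1
  · linear_combination entry 1 0

-- The entries of `⁅M, N⁆` are, up to sign, the minors of the vectors `(A₀₁, A₁₀, A₀₀ - A₁₁)` for
-- `A = M, N`. The vector of `W` is proportional to both, so it is killed by these minors.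
theorem bracket_apply_smul_eq_scalar_of_commute (hM : Commute W M) (hN : Commute W N)
    (i j : Fin 2) : ⁅M, N⁆ i j • W = scalar (Fin 2) (⁅M, N⁆ i j * W 0 0) := by
  obtain ⟨hM₁, hM₂, hM₃⟩ := minors_eq_of_commute hM
  obtain ⟨hN₁, hN₂, hN₃⟩ := minors_eq_of_commute hN
  have expand : ⁅M, N⁆ i j = M i 0 * N 0 j + M i 1 * N 1 j - (N i 0 * M 0 j + N i 1 * M 1 j) := by
    rw [Ring.lie_def, Matrix.sub_apply, mul_apply, mul_apply, Fin.sum_univ_two, Fin.sum_univ_two]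
  have upper : ⁅M, N⁆ i j * W 0 1 = 0 := by
    rw [expand]
    fin_cases i <;> fin_cases j <;> grind only
  have lower : ⁅M, N⁆ i j * W 1 0 = 0 := by
    rw [expand]
    fin_cases i <;> fin_cases j <;> grind only
  have diag : ⁅M, N⁆ i j * W 1 1 = ⁅M, N⁆ i j * W 0 0 := by
    rw [expand]
    fin_cases i <;> fin_cases j <;> grind only
  ext r s
  fin_cases r <;> fin_cases s <;> simp [upper, lower, diag]

theorem mem_range_scalar_of_commute_of_isUnit_bracket_apply (hij : IsUnit (⁅M, N⁆ i j))
    (hM : Commute W M) (hN : Commute W N) : W ∈ Set.range (scalar (Fin 2)) := by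
  refine ⟨W 0 0, hij.smul_left_cancel.mp ?_⟩
  rw [bracket_apply_smul_eq_scalar_of_commute hM hN, scalar_apply, scalar_apply, ← diagonal_smul]
  rfl

theorem pow_mem_range_scalar_of_eq_smul_pow (hij : IsUnit (⁅M, N⁆ i j)) {m n : ℕ} {c : R}
    (h : M ^ m = c • N ^ n) : M ^ m ∈ Set.range (scalar (Fin 2)) := by
  refine mem_range_scalar_of_commute_of_isUnit_bracket_apply hij (Commute.pow_self M m) ?_
  rw [h]
  exact (Commute.pow_self N n).smul_left c

theorem mem_center_of_commute_of_isUnit_bracket_apply {u v w : GL (Fin 2) R}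
    (hij : IsUnit (⁅u.val, v.val⁆ i j)) (hu : Commute w u) (hv : Commute w v) :
    w ∈ Subgroup.center (GL (Fin 2) R) :=
  GeneralLinearGroup.mem_center_iff_val_mem_range_scalar.mpr <|
    mem_range_scalar_of_commute_of_isUnit_bracket_apply hij hu.units_val hv.units_val

end Matrix

section Generators

variable {R : Type*} [CommRing R] {α : R}

/-- The matrix `C` representing the automorphism `σ` of `ℙ¹`, the first of the two generators that
are compared modulo scalars; defined for every parameter `α`. -/
def sigmaMatrix (α : R) : Matrix (Fin 2) (Fin 2) R := !![1, -1; 1, -α]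

/-- The matrix `D` representing the automorphism `τ` of `ℙ¹`, the second of the two generators that
are compared modulo scalars; defined for every parameter `α`. -/
def tauMatrix (α : R) : Matrix (Fin 2) (Fin 2) R := !![0, 1; α - 1, 1]

theorem bracket_sigmaMatrix_tauMatrix_apply_zero_zero (α : R) :
    ⁅sigmaMatrix α, tauMatrix α⁆ 0 0 = -α := by
  simp [sigmaMatrix, tauMatrix, Ring.lie_def]

theorem isUnit_of_sq_add_self_sub_one_eq_zero (hα : α ^ 2 + α - 1 = 0) : IsUnit α :=
  .of_mul_eq_one (α + 1) (by linear_combination hα)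

theorem isUnit_bracket_sigmaMatrix_tauMatrix_apply_zero_zero (hα : α ^ 2 + α - 1 = 0) :
    IsUnit (⁅sigmaMatrix α, tauMatrix α⁆ 0 0) := by
  rw [bracket_sigmaMatrix_tauMatrix_apply_zero_zero]
  exact (isUnit_of_sq_add_self_sub_one_eq_zero hα).neg

-- Cayley–Hamilton: the trace and the determinant of `C` both equal `1 - α = α ^ 2`.
theorem sigmaMatrix_sq (hα : α ^ 2 + α - 1 = 0) :
    sigmaMatrix α ^ 2 = α ^ 2 • (sigmaMatrix α - 1) := by
  ext r s
  fin_cases r <;> fin_cases s <;> simp [sigmaMatrix, sq] <;> grind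

theorem sigmaMatrix_pow_three (hα : α ^ 2 + α - 1 = 0) :
    sigmaMatrix α ^ 3 = -α ^ 3 • (sigmaMatrix α + α • 1) :=
  calc
    sigmaMatrix α ^ 3 = α ^ 2 • (sigmaMatrix α ^ 2 - sigmaMatrix α) := by
      rw [pow_succ, sigmaMatrix_sq hα, smul_mul_assoc, sub_mul, one_mul, ← sq, sigmaMatrix_sq hα]
    _ = -α ^ 3 • (sigmaMatrix α + α • 1) := by
      rw [sigmaMatrix_sq hα]
      linear_combination (norm := module) (α ^ 2 * hα) • sigmaMatrix α

theorem sigmaMatrix_pow_four (hα : α ^ 2 + α - 1 = 0) :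
    sigmaMatrix α ^ 4 = -α ^ 3 • (sigmaMatrix α - α ^ 2 • 1) :=
  calc
    sigmaMatrix α ^ 4 = -α ^ 3 • (sigmaMatrix α ^ 2 + α • sigmaMatrix α) := by
      rw [pow_succ, sigmaMatrix_pow_three hα, smul_mul_assoc, add_mul, smul_mul_assoc, one_mul,
        ← sq]
    _ = -α ^ 3 • (sigmaMatrix α - α ^ 2 • 1) := by
      rw [sigmaMatrix_sq hα]
      linear_combination (norm := module) (-α ^ 3 * hα) • sigmaMatrix α

theorem isUnit_sigmaMatrix_pow_apply_one_zero (hα : α ^ 2 + α - 1 = 0) {i : ℕ}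
    (hi : i ∈ ({1, 2, 3, 4} : Set ℕ)) : IsUnit ((sigmaMatrix α ^ i) 1 0) := by
  have hunit := isUnit_of_sq_add_self_sub_one_eq_zero hα
  have hentry : sigmaMatrix α 1 0 = 1 := rfl
  rcases hi with rfl | rfl | rfl | rfl
  · simp [hentry]
  · simp [sigmaMatrix_sq hα, hentry, hunit.pow]
  · simp [sigmaMatrix_pow_three hα, hentry, hunit.pow]
  · simp [sigmaMatrix_pow_four hα, hentry, hunit.pow]

theorem sigmaMatrix_pow_notMem_range_scalar [Nontrivial R] (hα : α ^ 2 + α - 1 = 0) {i : ℕ}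
    (hi : i ∈ ({1, 2, 3, 4} : Set ℕ)) :
    sigmaMatrix α ^ i ∉ Set.range (Matrix.scalar (Fin 2)) := by
  rintro ⟨a, ha⟩
  have hunit := isUnit_sigmaMatrix_pow_apply_one_zero hα hi
  rw [← ha] at hunit
  simp at hunit

end Generators

theorem C_D_generate_trivially_intersecting_subgroups_general
    {R : Type*} [CommRing R] [Nontrivial R] {α : R} (hα : α ^ 2 + α - 1 = 0) :
    (∀ i ∈ ({1, 2, 3, 4} : Set ℕ), ∀ (j : ℕ) (c : R),
      sigmaMatrix α ^ i ≠ c • tauMatrix α ^ j) ∧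
    ∀ u v : GL (Fin 2) R, u.val = sigmaMatrix α → v.val = tauMatrix α →
      Subgroup.zpowers (QuotientGroup.mk u : GL (Fin 2) R ⧸ Subgroup.center (GL (Fin 2) R)) ⊓
        Subgroup.zpowers (QuotientGroup.mk v : GL (Fin 2) R ⧸ Subgroup.center (GL (Fin 2) R)) =
          ⊥ := by
  have hbracket := isUnit_bracket_sigmaMatrix_tauMatrix_apply_zero_zero hα
  refine ⟨fun i hi j c h ↦ sigmaMatrix_pow_notMem_range_scalar hα hi
    (pow_mem_range_scalar_of_eq_smul_pow hbracket h), fun u v hu hv ↦ ?_⟩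
  rw [← hu, ← hv] at hbracket
  exact zpowers_mk_inf_zpowers_mk_eq_bot_of_commute fun w ↦
    mem_center_of_commute_of_isUnit_bracket_apply hbracket

/-- For `α` with `α² + α - 1 = 0`, `C = !![1,-1;1,-α]` and `D = !![0,1;α-1,1]`:
no power `Cⁱ` (`i ∈ {1,2,3,4}`) is a scalar multiple of a power `Dʲ`
(`j ∈ {1,2,3,4}`); consequently the cyclic order-5 subgroups of `PGL₂(k)`
generated by the images of `C` and `D` intersect trivially. -/
theorem C_D_generate_trivially_intersecting_subgroups
    (k : Type*) [Field k] (h2 : (2 : k) ≠ 0)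
    (α : k) (hα : α ^ 2 + α - 1 = 0) :
    (∀ i ∈ ({1, 2, 3, 4} : Set ℕ), ∀ j ∈ ({1, 2, 3, 4} : Set ℕ), ∀ c : k,
      (!![1, -1; 1, -α] : Matrix (Fin 2) (Fin 2) k) ^ i ≠
        c • (!![0, 1; α - 1, 1] : Matrix (Fin 2) (Fin 2) k) ^ j) ∧
    ∀ u v : GL (Fin 2) k,
      (↑u : Matrix (Fin 2) (Fin 2) k) = !![1, -1; 1, -α] →
      (↑v : Matrix (Fin 2) (Fin 2) k) = !![0, 1; α - 1, 1] →
      Subgroup.zpowers (QuotientGroup.mk u :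
          GL (Fin 2) k ⧸ Subgroup.center (GL (Fin 2) k)) ⊓
        Subgroup.zpowers (QuotientGroup.mk v :
          GL (Fin 2) k ⧸ Subgroup.center (GL (Fin 2) k)) = ⊥ :=
  have h := C_D_generate_trivially_intersecting_subgroups_general hα
  ⟨fun i hi j _ ↦ h.1 i hi j, h.2⟩
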